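/- For u ∈ L¹(ℝ) and α ∉ πℤ, the Abel means of the fractional Fourier integral of u converge to u in L¹: ‖∫_ℝ (ℱ_α u)(x) K_{−α}(x,·) e^{−2πε|csc α||x|} dx − u‖_{L¹} → 0 as ε → 0⁺. -/

import Mathlib

/-!
Write `c = cot α` and `v(s) = exp(πi c s²) u(s)`. In `K_α(x,s) K_{-α}(x,t)` the `x²` chirps cancel and
`A_α A_{-α} = |csc α|` (`Aa_mul_neg`), so Fubini (the Abel weight makes the double integrand
integrable) and the Fourier transform of `exp(-a|x|)` (`integral_phase`) give
`M_ε(u)(t) = exp(-πi c t²) (P_ε ∗ v)(t)` with the Poisson kernel `P_ε(y) = ε / (π (ε² + y²))`; this is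
`abel_eq`. The unimodular chirp drops out of the norm, so the `L¹` error is `‖P_ε ∗ v - v‖₁`. It tends
to `0` because `P_ε` has mass one and rescales a fixed integrable function (`tendsto_approx`), which
rests on the continuity of translations in `L¹` (`tendsto_translate`).
-/

open MeasureTheory Real Filter Topology

/-- A_α = √(1 - i cot α) -/
noncomputable def Aa (α : ℝ) : ℂ :=
  ((1 : ℂ) - Complex.I * ((Real.cos α / Real.sin α : ℝ) : ℂ)) ^ ((1 : ℂ) / 2)

/-- The FRFT kernel K_α(x,t) = A_α exp[2πi(t²cot α/2 − xt csc α + x²cot α/2)]. -/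
noncomputable def Ker (α : ℝ) (x t : ℝ) : ℂ :=
  Aa α * Complex.exp (2 * (Real.pi : ℂ) * Complex.I *
    (((t : ℂ) ^ 2 / 2) * ((Real.cos α / Real.sin α : ℝ) : ℂ) -
      (x : ℂ) * (t : ℂ) * ((1 / Real.sin α : ℝ) : ℂ) +
      ((x : ℂ) ^ 2 / 2) * ((Real.cos α / Real.sin α : ℝ) : ℂ)))

/-- Translation is continuous in `L¹`. -/
lemma tendsto_translate (v : ℝ → ℂ) (hv : Integrable v volume) :
    Tendsto (fun h : ℝ => ∫⁻ t, ‖v (t + h) - v t‖ₑ) (𝓝 0) (𝓝 0) := by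
  have hv1 : MemLp v 1 volume := memLp_one_iff_integrable.2 hv
  let g : C(ℝ, C(ℝ, ℝ)) := ContinuousMap.curry ⟨fun p : ℝ × ℝ => p.2 + p.1, by fun_prop⟩
  have hg (h : ℝ) : MeasurePreserving (g h) volume volume := measurePreserving_add_right volume h
  have hc : Continuous fun h : ℝ => Lp.compMeasurePreserving (g h) (hg h) (hv1.toLp v) :=
    continuous_const.compMeasurePreservingLp g.continuous hg ENNReal.one_ne_top
  have h2 : Tendsto (fun h : ℝ => edist (Lp.compMeasurePreserving (g h) (hg h) (hv1.toLp v))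
      (Lp.compMeasurePreserving (g 0) (hg 0) (hv1.toLp v))) (𝓝 0) (𝓝 0) :=
    (tendsto_iff_edist_tendsto_0).1 (hc.tendsto 0)
  refine h2.congr fun h => ?_
  rw [Lp.toLp_compMeasurePreserving hv1 (hg h), Lp.toLp_compMeasurePreserving hv1 (hg 0),
    Lp.edist_toLp_toLp, eLpNorm_one_eq_lintegral_enorm]
  refine lintegral_congr fun t => ?_
  simp [g]

lemma lintegral_translate_le (v : ℝ → ℂ) (hv : Integrable v volume) (h : ℝ) :
    ∫⁻ t, ‖v (t + h) - v t‖ₑ ≤ 2 * ∫⁻ t, ‖v t‖ₑ := by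
  calc ∫⁻ t, ‖v (t + h) - v t‖ₑ ≤ ∫⁻ t, (‖v (t + h)‖ₑ + ‖v t‖ₑ) :=
        lintegral_mono fun t => enorm_sub_le
    _ = (∫⁻ t, ‖v (t + h)‖ₑ) + ∫⁻ t, ‖v t‖ₑ := lintegral_add_right' _ hv.1.enorm
    _ = 2 * ∫⁻ t, ‖v t‖ₑ := by
        rw [lintegral_add_right_eq_self (fun t => ‖v t‖ₑ) h, two_mul]

/-- Approximate identity: by Minkowski's inequality the `L¹` norm is at most
`∫ |P y| ω(ε y) dy`, where `ω` is the `L¹` modulus of continuity of `v`, bounded by `2‖v‖₁` and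
tending to `0` at `0`; dominated convergence finishes. The difference `v (t + ε y) - v t` is kept
under the integral, so no normalisation of `P` is needed. -/
lemma tendsto_approx (v : ℝ → ℂ) (hv : Integrable v volume) (P : ℝ → ℝ) (hP : Integrable P) :
    Tendsto (fun ε : ℝ => ∫⁻ t, ‖∫ y, (P y : ℂ) * (v (t + ε * y) - v t)‖ₑ) (𝓝 0) (𝓝 0) := by
  have hdiff (ε : ℝ) : AEStronglyMeasurable
      (fun p : ℝ × ℝ => v (p.2 + ε * p.1) - v p.2) (volume.prod volume) := by
    have h1 : Measure.QuasiMeasurePreserving (fun p : ℝ × ℝ => p.2 + ε * p.1)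
        (volume.prod volume) volume :=
      QuasiMeasurePreserving.prod_of_right (by fun_prop) (ae_of_all _ fun y =>
        (measurePreserving_add_right volume (ε * y)).quasiMeasurePreserving)
    exact (hv.1.comp_quasiMeasurePreserving h1).sub hv.1.comp_snd
  have hmeas (ε : ℝ) : AEStronglyMeasurable
      (fun p : ℝ × ℝ => (P p.1 : ℂ) * (v (p.2 + ε * p.1) - v p.2)) (volume.prod volume) :=
    (Complex.continuous_ofReal.comp_aestronglyMeasurable hP.1.comp_fst).mul (hdiff ε)
  have hle (ε : ℝ) : ∫⁻ t, ‖∫ y, (P y : ℂ) * (v (t + ε * y) - v t)‖ₑ ≤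
      ∫⁻ y, ‖P y‖ₑ * ∫⁻ t, ‖v (t + ε * y) - v t‖ₑ := by
    calc _ ≤ ∫⁻ t, ∫⁻ y, ‖(P y : ℂ) * (v (t + ε * y) - v t)‖ₑ :=
          lintegral_mono fun t => enorm_integral_le_lintegral_enorm _
      _ = ∫⁻ y, ∫⁻ t, ‖(P y : ℂ) * (v (t + ε * y) - v t)‖ₑ :=
          (lintegral_lintegral_swap (hmeas ε).enorm).symm
      _ = _ := by
          refine lintegral_congr fun y => ?_
          rw [← lintegral_const_mul' _ _ enorm_ne_top]
          refine lintegral_congr fun t => ?_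
          rw [enorm_mul]
          congr 1
          simp [enorm_eq_nnnorm]
  refine tendsto_of_tendsto_of_tendsto_of_le_of_le tendsto_const_nhds ?_ (fun _ => zero_le)
    hle
  rw [← lintegral_zero (μ := (volume : Measure ℝ))]
  refine tendsto_lintegral_filter_of_dominated_convergence'
    (fun y => ‖P y‖ₑ * (2 * ∫⁻ t, ‖v t‖ₑ)) (.of_forall fun ε => ?_) (.of_forall fun ε =>
      ae_of_all _ fun y => by gcongr; exact lintegral_translate_le v hv _) ?_
      (ae_of_all _ fun y => ?_)
  · exact hP.1.enorm.mul (hdiff ε).enorm.lintegral_prod_right'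
  · rw [lintegral_mul_const'' _ hP.1.enorm]
    exact ENNReal.mul_ne_top hP.2.ne (ENNReal.mul_ne_top (by simp) hv.2.ne)
  · have h0 : Tendsto (fun ε : ℝ => ε * y) (𝓝 0) (𝓝 0) := by
      simpa using (continuous_mul_const y).tendsto 0
    simpa using ENNReal.Tendsto.const_mul ((tendsto_translate v hv).comp h0)
      (Or.inr (enorm_ne_top (x := P y)))

lemma integrable_exp_abs {a : ℝ} (ha : 0 < a) : Integrable fun x : ℝ => rexp (-a * |x|) := by
  rw [← integrableOn_univ, ← Set.Iic_union_Ioi (a := (0:ℝ))]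
  refine IntegrableOn.union ?_ ?_
  · refine (integrableOn_exp_mul_Iic ha 0).congr_fun (fun x hx => ?_) measurableSet_Iic
    simp only [abs_of_nonpos (Set.mem_Iic.1 hx)]; ring_nf
  · refine (integrableOn_exp_mul_Ioi (neg_lt_zero.2 ha) 0).congr_fun (fun x hx => ?_)
      measurableSet_Ioi
    simp only [abs_of_pos (Set.mem_Ioi.1 hx)]

/-- The Fourier transform of the Abel weight `exp (-a|x|)`. -/
lemma integral_phase {a : ℝ} (ha : 0 < a) (b : ℝ) :
    ∫ x : ℝ, Complex.exp (Complex.I * b * x) * (rexp (-a * |x|) : ℂ) =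
      ((2 * a / (a ^ 2 + b ^ 2) : ℝ) : ℂ) := by
  have hl : Set.EqOn (fun x : ℝ => Complex.exp ((a + Complex.I * b : ℂ) * x))
      (fun x : ℝ => Complex.exp (Complex.I * b * x) * (rexp (-a * |x|) : ℂ)) (Set.Iic 0) := by
    intro x hx
    simp only [abs_of_nonpos (Set.mem_Iic.1 hx)]
    push_cast
    rw [← Complex.exp_add]; ring_nf
  have hr : Set.EqOn (fun x : ℝ => Complex.exp ((-a + Complex.I * b : ℂ) * x))
      (fun x : ℝ => Complex.exp (Complex.I * b * x) * (rexp (-a * |x|) : ℂ)) (Set.Ioi 0) := by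
    intro x hx
    simp only [abs_of_pos (Set.mem_Ioi.1 hx)]
    push_cast
    rw [← Complex.exp_add]; ring_nf
  have h1 : 0 < (a + Complex.I * b : ℂ).re := by simpa
  have h2 : (-a + Complex.I * b : ℂ).re < 0 := by simpa
  rw [← intervalIntegral.integral_Iic_add_Ioi (b := 0)
    ((integrableOn_exp_mul_complex_Iic h1 0).congr_fun hl measurableSet_Iic)
    ((integrableOn_exp_mul_complex_Ioi h2 0).congr_fun hr measurableSet_Ioi),
    ← setIntegral_congr_fun measurableSet_Iic hl, ← setIntegral_congr_fun measurableSet_Ioi hr,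
    integral_exp_mul_complex_Iic h1, integral_exp_mul_complex_Ioi h2]
  have n1 : (a + Complex.I * b : ℂ) ≠ 0 := fun h => by rw [h] at h1; simp at h1
  have n2 : (-a + Complex.I * b : ℂ) ≠ 0 := fun h => by rw [h] at h2; simp at h2
  have n3 : (a ^ 2 + b ^ 2 : ℂ) ≠ 0 := by
    have : a ^ 2 + b ^ 2 ≠ 0 := by positivity
    exact_mod_cast this
  push_cast
  simp only [mul_zero, Complex.exp_zero]
  field_simp
  ring_nf
  simp only [Complex.I_sq]
  ring

/-- With the principal branch, `A_{-α}` is the conjugate of `A_α`, so the product is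
`|1 - i cot α| = |csc α|`. -/
lemma Aa_mul_neg {α : ℝ} (hs : Real.sin α ≠ 0) :
    Aa α * Aa (-α) = ((|1 / Real.sin α| : ℝ) : ℂ) := by
  set c : ℝ := Real.cos α / Real.sin α with hc
  set z : ℂ := 1 - Complex.I * (c : ℂ) with hz
  have hre : z.re = 1 := by simp [hz]
  have hA : Aa α = z ^ ((1 : ℂ) / 2) := rfl
  have hconj : Aa (-α) = (starRingEnd ℂ) (Aa α) := by
    have h1 : (1 : ℂ) - Complex.I * ((Real.cos (-α) / Real.sin (-α) : ℝ) : ℂ)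
        = (starRingEnd ℂ) z := by
      rw [hz, map_sub, map_mul, Complex.conj_ofReal, Complex.conj_I, Real.cos_neg, Real.sin_neg,
        div_neg, map_one, hc]
      push_cast
      ring
    have harg : z.arg ≠ π := by
      intro h
      rw [Complex.arg_eq_pi_iff] at h
      linarith [h.1]
    have hhalf : (starRingEnd ℂ) ((1 : ℂ) / 2) = 1 / 2 := by
      rw [map_div₀, map_one, Complex.conj_ofNat]
    rw [hA, Aa, h1, Complex.conj_cpow _ _ harg, hhalf]
  have hsq : Aa α ^ 2 = z := by
    rw [hA, one_div]
    exact_mod_cast Complex.cpow_nat_inv_pow z (two_ne_zero)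
  rw [hconj, Complex.mul_conj']
  norm_cast
  rw [← norm_pow, hsq, ← sq_eq_sq₀ (norm_nonneg _) (abs_nonneg _), sq_abs, ← Complex.normSq_eq_norm_sq,
    Complex.normSq_apply]
  have him : z.im = -c := by simp [hz]
  rw [hre, him, hc]
  field_simp
  linarith [Real.sin_sq_add_cos_sq α]

/-- The chirped function `s ↦ exp(πi cot(α) s²) u(s)`. Up to constants, a dilation and another chirp,
its Fourier transform is the fractional Fourier transform of `u`. -/
noncomputable def chirp (α : ℝ) (u : ℝ → ℂ) (s : ℝ) : ℂ :=
  Complex.exp (Complex.I * ((π * (Real.cos α / Real.sin α) * s ^ 2 : ℝ) : ℂ)) * u s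

lemma integrable_chirp (α : ℝ) {u : ℝ → ℂ} (hu : Integrable u) : Integrable (chirp α u) := by
  refine hu.bdd_mul (c := 1) (Continuous.aestronglyMeasurable (by fun_prop)) (ae_of_all _ fun s => ?_)
  rw [mul_comm, Complex.norm_exp_ofReal_mul_I]

/-- The `x²` chirps of `K_α` and `K_{-α}` cancel, leaving a plain Fourier phase in `x`. -/
lemma integrand_eq {α : ℝ} (hs : Real.sin α ≠ 0) (u : ℝ → ℂ) (t x s e : ℝ) :
    Ker α x s * u s * Ker (-α) x t * (e : ℂ) =
      ((|1 / Real.sin α| : ℝ) : ℂ) *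
        Complex.exp (-(Complex.I * ((π * (Real.cos α / Real.sin α) * t ^ 2 : ℝ) : ℂ))) *
        (Complex.exp (Complex.I * ((2 * π * (t - s) * (1 / Real.sin α) : ℝ) : ℂ) * x) *
          ((e : ℂ) * chirp α u s)) := by
  have h : Ker α x s * u s * Ker (-α) x t * (e : ℂ) = (Aa α * Aa (-α)) *
      (Complex.exp (2 * (Real.pi : ℂ) * Complex.I *
    (((s : ℂ) ^ 2 / 2) * ((Real.cos α / Real.sin α : ℝ) : ℂ) -
      (x : ℂ) * (s : ℂ) * ((1 / Real.sin α : ℝ) : ℂ) +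
      ((x : ℂ) ^ 2 / 2) * ((Real.cos α / Real.sin α : ℝ) : ℂ))) *
      Complex.exp (2 * (Real.pi : ℂ) * Complex.I *
    (((t : ℂ) ^ 2 / 2) * ((Real.cos (-α) / Real.sin (-α) : ℝ) : ℂ) -
      (x : ℂ) * (t : ℂ) * ((1 / Real.sin (-α) : ℝ) : ℂ) +
      ((x : ℂ) ^ 2 / 2) * ((Real.cos (-α) / Real.sin (-α) : ℝ) : ℂ)))) * (e * u s) := by
    simp only [Ker]; ring
  rw [h, Aa_mul_neg hs, chirp, ← Complex.exp_add]
  have h2 : ∀ A B C D : ℂ, ∀ w : ℂ, D * Complex.exp A * (Complex.exp B * (e * (Complex.exp C * w))) =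
      D * Complex.exp (A + B + C) * (e * w) := by
    intro A B C D w
    rw [Complex.exp_add, Complex.exp_add]; ring
  rw [h2]
  congr 3
  simp only [Real.cos_neg, Real.sin_neg]
  push_cast
  simp only [div_neg]
  ring

/-- The Abel mean, multiplied by the chirp at `t`, is the Poisson integral at height `ε` of the chirped
function, rescaled so that `ε` enters only through the translation. -/
lemma abel_eq {α : ℝ} (hs : Real.sin α ≠ 0) {u : ℝ → ℂ} (hu : Integrable u) {ε : ℝ} (hε : 0 < ε)
    (t : ℝ) :
    (∫ x : ℝ, (∫ s : ℝ, Ker α x s * u s) * Ker (-α) x t *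
            ((Real.exp (-2 * Real.pi * ε * |1 / Real.sin α| * |x|) : ℝ) : ℂ)) =
      Complex.exp (-(Complex.I * ((π * (Real.cos α / Real.sin α) * t ^ 2 : ℝ) : ℂ))) *
        ∫ y, ((π⁻¹ * (1 + y ^ 2)⁻¹ : ℝ) : ℂ) * chirp α u (t + ε * y) := by
  set D : ℝ := |1 / Real.sin α| with hD
  have hD0 : 0 < D := abs_pos.2 (one_div_ne_zero hs)
  have hD2 : D ^ 2 = (1 / Real.sin α) ^ 2 := sq_abs _
  set w : ℂ := Complex.exp (-(Complex.I * ((π * (Real.cos α / Real.sin α) * t ^ 2 : ℝ) : ℂ)))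
  have ha : 0 < 2 * π * ε * D := by positivity
  have hF : Integrable (Function.uncurry fun x s : ℝ =>
      Complex.exp (Complex.I * ((2 * π * (t - s) * (1 / Real.sin α) : ℝ) : ℂ) * x) *
          (((rexp (-(2 * π * ε * D) * |x|) : ℝ) : ℂ) * chirp α u s)) (volume.prod volume) := by
    refine ((integrable_exp_abs ha).ofReal.mul_prod (integrable_chirp α hu)).bdd_mul (c := 1)
      (Continuous.aestronglyMeasurable (by fun_prop)) (ae_of_all _ fun p => ?_)
    rw [mul_assoc, ← Complex.ofReal_mul, mul_comm, Complex.norm_exp_ofReal_mul_I]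
  have h1 (x : ℝ) : (∫ s : ℝ, Ker α x s * u s) * Ker (-α) x t *
      ((Real.exp (-2 * Real.pi * ε * D * |x|) : ℝ) : ℂ) = (D * w) * ∫ s : ℝ,
      Complex.exp (Complex.I * ((2 * π * (t - s) * (1 / Real.sin α) : ℝ) : ℂ) * x) *
          (((rexp (-(2 * π * ε * D) * |x|) : ℝ) : ℂ) * chirp α u s) := by
    rw [← integral_const_mul, ← integral_mul_const, ← integral_mul_const]
    refine integral_congr_ae (ae_of_all _ fun s => ?_)
    simp only
    rw [integrand_eq hs]
    simp only [neg_mul, w, D]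
  simp_rw [h1]
  rw [integral_const_mul, integral_integral_swap hF, mul_comm (D : ℂ) w, mul_assoc]
  congr 1
  have h2 (s : ℝ) : ∫ x : ℝ,
      Complex.exp (Complex.I * ((2 * π * (t - s) * (1 / Real.sin α) : ℝ) : ℂ) * x) *
          (((rexp (-(2 * π * ε * D) * |x|) : ℝ) : ℂ) * chirp α u s) =
      ((2 * (2 * π * ε * D) / ((2 * π * ε * D) ^ 2 +
        (2 * π * (t - s) * (1 / Real.sin α)) ^ 2) : ℝ) : ℂ) * chirp α u s := by
    rw [← integral_phase ha, ← integral_mul_const]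
    simp only [mul_assoc]
  simp_rw [h2]
  -- substitute `s = t + ε y`
  rw [← integral_const_mul, ← integral_add_left_eq_self _ t]
  have h3 := Measure.integral_comp_mul_left (fun s : ℝ => (D : ℂ) *
    (((2 * (2 * π * ε * D) / ((2 * π * ε * D) ^ 2 +
      (2 * π * (t - (t + s)) * (1 / Real.sin α)) ^ 2) : ℝ) : ℂ) * chirp α u (t + s))) ε
  rw [abs_of_pos (inv_pos.2 hε), ← inv_smul_eq_iff₀ (inv_ne_zero hε.ne'), inv_inv] at h3
  rw [← h3, ← integral_smul]
  refine integral_congr_ae (ae_of_all _ fun y => ?_)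
  simp only
  rw [Complex.real_smul, ← mul_assoc, ← mul_assoc, ← Complex.ofReal_mul, ← Complex.ofReal_mul]
  congr 2
  have h4 : (2 * π * (t - (t + ε * y)) * (1 / Real.sin α)) ^ 2 = (2 * π * ε * D) ^ 2 * y ^ 2 := by
    rw [mul_pow _ D, hD2]; ring
  rw [h4]
  have : (1 + y ^ 2) ≠ 0 := by positivity
  have h5 : (2 * π * ε * D) ^ 2 + (2 * π * ε * D) ^ 2 * y ^ 2 = (2 * π * ε * D) ^ 2 * (1 + y ^ 2) := by
    ring
  rw [h5]
  field_simp

theorem stmt14 (α : ℝ) (hα : ∀ n : ℤ, α ≠ n * Real.pi) (u : ℝ → ℂ)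
    (hu : Integrable u volume) :
    Tendsto (fun ε : ℝ =>
        eLpNorm (fun t : ℝ =>
          (∫ x : ℝ, (∫ s : ℝ, Ker α x s * u s) * Ker (-α) x t *
            ((Real.exp (-2 * Real.pi * ε * |1 / Real.sin α| * |x|) : ℝ) : ℂ)) - u t) 1 volume)
      (𝓝[>] (0 : ℝ)) (𝓝 0) := by
  have hs : Real.sin α ≠ 0 := fun h => by
    obtain ⟨n, hn⟩ := Real.sin_eq_zero_iff.1 h
    exact hα n hn.symm
  have hP : Integrable fun y : ℝ => π⁻¹ * (1 + y ^ 2)⁻¹ := integrable_inv_one_add_sq.const_mul _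
  have hP1 : ∫ y : ℝ, ((π⁻¹ * (1 + y ^ 2)⁻¹ : ℝ) : ℂ) = 1 := by
    rw [integral_complex_ofReal, integral_const_mul, integral_univ_inv_one_add_sq,
      inv_mul_cancel₀ Real.pi_ne_zero, Complex.ofReal_one]
  have hv := integrable_chirp α hu
  refine ((tendsto_approx _ hv _ hP).mono_left nhdsWithin_le_nhds).congr' ?_
  filter_upwards [self_mem_nhdsWithin] with ε hε
  replace hε : 0 < ε := hε
  rw [eLpNorm_one_eq_lintegral_enorm]
  refine lintegral_congr fun t => ?_
  rw [abel_eq hs hu hε]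
  have hu' : u t = Complex.exp (-(Complex.I * ((π * (Real.cos α / Real.sin α) * t ^ 2 : ℝ) : ℂ))) *
      chirp α u t := by
    rw [chirp, ← mul_assoc, ← Complex.exp_add, neg_add_cancel, Complex.exp_zero, one_mul]
  have hI1 : Integrable fun y : ℝ => ((π⁻¹ * (1 + y ^ 2)⁻¹ : ℝ) : ℂ) * chirp α u (t + ε * y) := by
    have h1 : Integrable fun y : ℝ => chirp α u (t + ε * y) :=
      (hv.comp_add_left t).comp_mul_left' hε.ne'
    refine h1.bdd_mul (c := π⁻¹) (Continuous.aestronglyMeasurable ?_) (ae_of_all _ fun y => ?_)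
    · refine Complex.continuous_ofReal.comp (continuous_const.mul (Continuous.inv₀ (by fun_prop) ?_))
      intro y; positivity
    · rw [Complex.norm_real, Real.norm_of_nonneg (by positivity)]
      exact mul_le_of_le_one_right (by positivity) (inv_le_one_of_one_le₀ (by nlinarith [sq_nonneg y]))
  have hI2 : Integrable fun y : ℝ => ((π⁻¹ * (1 + y ^ 2)⁻¹ : ℝ) : ℂ) * chirp α u t :=
    hP.ofReal.mul_const _
  conv_rhs => rw [hu', ← mul_sub]
  have hone : ‖Complex.exp (-(Complex.I * ((π * (Real.cos α / Real.sin α) * t ^ 2 : ℝ) : ℂ)))‖ₑ = 1 := by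
    rw [← ofReal_norm, neg_mul_eq_mul_neg, ← Complex.ofReal_neg, mul_comm,
      Complex.norm_exp_ofReal_mul_I, ENNReal.ofReal_one]
  rw [enorm_mul, hone, one_mul]
  simp_rw [mul_sub]
  rw [integral_sub hI1 hI2, integral_mul_const, hP1, one_mul]
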